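/- arXiv:2009.02712 — 2 statements merged into one kernel-verified Lean document; each statement's English description precedes it below -/
import Mathlib

section
/- Let ρ ∈ (0, 1), σ₀ ∈ (0, 1), t₀ > 1, and let λ₁ > 1 satisfy λ₁^{σ₀} ≥ 5 Γ(1−ρ). Then the function σ ↦ E_ρ(−λ₁^σ t₀^ρ) is strictly monotonically decreasing with respect to σ on the interval [σ₀, 1). -/
open Set Real

/-- The Mittag-Leffler function `E_ρ(z) = ∑_{k=0}^∞ z^k / Γ(ρk + 1)`. -/
noncomputable def mittagLeffler (ρ z : ℝ) : ℝ := ∑' k : ℕ, z ^ k / Real.Gamma (ρ * k + 1)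

/-!
Since `E_ρ' = E_{ρ,ρ} / ρ`, it suffices that `E_{ρ,ρ}` is positive on `ℝ`, which is only in
question on the negative axis. There `g x = E_{ρ,ρ}(-x)` solves a Volterra equation
`g x = c - x ∫₀¹ k(y) g(x y) dy` with `c > 0` and a nonnegative *monotone* kernel `k`. Suppose `g`
has a first zero `m`, and compare the equations at `m` and at `m s` for `s < 1`. Substituting
`y = s u` and using `k(s u) ≤ k(u)`, the part `∫₀ˢ` of the integral at `m` contributes at most
`c - g(m s)`, so the rest must satisfy `g(m s) ≤ m ∫ₛ¹ k(y) g(m y) dy`. This fails if `s` is close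
to `1` and `g(m s)` is the maximum of `g(m y)` near `y = 1`, for then the right-hand side is at
most `m g(m s) ∫ₛ¹ k`.
-/

open Filter MeasureTheory Topology ProbabilityTheory intervalIntegral

/-- The two-parameter Mittag-Leffler function `E_{α,β}(z) = ∑_{k=0}^∞ z^k / Γ(αk + β)`. The
derivative of `E_α = E_{α,1}` is `E_{α,α} / α`. -/
noncomputable def mittagLefflerTwo (α β z : ℝ) : ℝ := ∑' k : ℕ, z ^ k / Gamma (α * k + β)

/-- The weight on `(0, 1)` whose `k`-th moment is `Γ(αk + β) / Γ(αk + β + γ)`, so that integrating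
`E_{α,β}(z y)` against it raises `β` to `β + γ`. It is the density `v^(β-1) (1-v)^(γ-1) / Γ(γ)` in
the variable `y = v^α`. -/
noncomputable def mittagLefflerKernel (α β γ y : ℝ) : ℝ :=
  y ^ (β / α - 1) * (1 - y ^ α⁻¹) ^ (γ - 1) / (α * Gamma γ)

section Kernel

lemma integral_rpow_mul_one_sub_rpow {a b : ℝ} (ha : 0 < a) (hb : 0 < b) :
    ∫ x in (0 : ℝ)..1, x ^ (a - 1) * (1 - x) ^ (b - 1) = Gamma a * Gamma b / Gamma (a + b) := by
  have integrand_ofReal : EqOn (fun x : ℝ ↦ (x : ℂ) ^ ((a : ℂ) - 1) * (1 - x) ^ ((b : ℂ) - 1))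
      (fun x : ℝ ↦ ((x ^ (a - 1) * (1 - x) ^ (b - 1) : ℝ) : ℂ)) (uIcc 0 1) := by
    intro x hx
    rw [uIcc_of_le zero_le_one] at hx
    simp only [Complex.ofReal_mul, Complex.ofReal_cpow hx.1,
      Complex.ofReal_cpow (sub_nonneg.2 hx.2), Complex.ofReal_sub, Complex.ofReal_one]
  rw [← beta, beta_eq_betaIntegralReal a b ha hb, Complex.betaIntegral,
    integral_congr integrand_ofReal, intervalIntegral.integral_ofReal, Complex.ofReal_re]

lemma integral_zero_one_eq_integral_comp_rpow {a : ℝ} (ha : 0 < a) (f : ℝ → ℝ) :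
    ∫ x in (0 : ℝ)..1, f x = ∫ x in (0 : ℝ)..1, a * x ^ (a - 1) * f (x ^ a) := by
  have image_rpow : (fun x : ℝ ↦ x ^ a) '' Ioo 0 1 = Ioo 0 1 := by
    ext y
    constructor
    · rintro ⟨x, hx, rfl⟩
      exact ⟨rpow_pos_of_pos hx.1 a, rpow_lt_one hx.1.le hx.2 ha⟩
    · intro hy
      exact ⟨y ^ a⁻¹, ⟨rpow_pos_of_pos hy.1 _, rpow_lt_one hy.1.le hy.2 (inv_pos.2 ha)⟩,
        rpow_inv_rpow hy.1.le ha.ne'⟩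
  have hderiv : ∀ x ∈ Ioo (0 : ℝ) 1,
      HasDerivWithinAt (fun x : ℝ ↦ x ^ a) (a * x ^ (a - 1)) (Ioo 0 1) x := fun x hx ↦
    (hasDerivAt_rpow_const (Or.inl hx.1.ne')).hasDerivWithinAt
  have hinj : InjOn (fun x : ℝ ↦ x ^ a) (Ioo 0 1) := fun x hx y hy ↦
    (rpow_left_inj hx.1.le hy.1.le ha.ne').1
  simp only [integral_of_le zero_le_one, integral_Ioc_eq_integral_Ioo]
  conv_lhs => rw [← image_rpow]
  rw [integral_image_eq_integral_abs_deriv_smul measurableSet_Ioo hderiv hinj]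
  refine setIntegral_congr_fun measurableSet_Ioo fun x hx ↦ ?_
  have : 0 ≤ a * x ^ (a - 1) := mul_nonneg ha.le (rpow_nonneg hx.1.le _)
  simp only [smul_eq_mul, abs_of_nonneg this]

variable {α β γ : ℝ}

lemma integral_mittagLefflerKernel_mul_pow (hα : 0 < α) (hβ : 0 < β) (hγ : 0 < γ) (k : ℕ) :
    ∫ y in (0 : ℝ)..1, mittagLefflerKernel α β γ y * y ^ k =
      Gamma (α * k + β) / Gamma (α * k + β + γ) := by
  have integrand_eq : EqOn
      (fun v ↦ α * v ^ (α - 1) * (mittagLefflerKernel α β γ (v ^ α) * (v ^ α) ^ k))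
      (fun v ↦ (Gamma γ)⁻¹ * (v ^ (α * k + β - 1) * (1 - v) ^ (γ - 1))) (Ioo 0 1) := by
    intro v hv
    have exponents : v ^ (α * k + β - 1) = v ^ (α - 1) * (v ^ α) ^ (β / α - 1) * (v ^ α) ^ k := by
      rw [← rpow_natCast, ← rpow_mul hv.1.le, ← rpow_mul hv.1.le, ← rpow_add hv.1,
        ← rpow_add hv.1]
      congr 1
      field_simp
      ring
    simp only [mittagLefflerKernel, rpow_rpow_inv hv.1.le hα.ne', exponents]
    field_simp
  rw [integral_zero_one_eq_integral_comp_rpow hα, integral_congr_Ioo_of_le zero_le_one integrand_eq,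
    intervalIntegral.integral_const_mul, integral_rpow_mul_one_sub_rpow (by positivity) hγ]
  have := (Gamma_pos_of_pos hγ).ne'
  field_simp

lemma intervalIntegrable_mittagLefflerKernel (hα : 0 < α) (hβ : 0 < β) (hγ : 0 < γ) :
    IntervalIntegrable (mittagLefflerKernel α β γ) volume 0 1 := by
  apply intervalIntegrable_of_integral_ne_zero
  have moment_zero := integral_mittagLefflerKernel_mul_pow hα hβ hγ 0
  simp only [pow_zero, mul_one, Nat.cast_zero, mul_zero, zero_add] at moment_zero
  rw [moment_zero]
  exact (div_pos (Gamma_pos_of_pos hβ) (Gamma_pos_of_pos (add_pos hβ hγ))).ne'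

lemma mittagLefflerKernel_nonneg (hα : 0 < α) (hγ : 0 < γ) {y : ℝ} (hy : y ∈ Icc 0 1) :
    0 ≤ mittagLefflerKernel α β γ y := by
  have : 0 ≤ 1 - y ^ α⁻¹ := sub_nonneg.2 (rpow_le_one hy.1 hy.2 (inv_nonneg.2 hα.le))
  have := Gamma_pos_of_pos hγ
  have := hy.1
  unfold mittagLefflerKernel
  positivity

lemma monotoneOn_mittagLefflerKernel (hα : 0 < α) (hαβ : α ≤ β) (hγ : 0 < γ) (hγ' : γ ≤ 1) :
    MonotoneOn (mittagLefflerKernel α β γ) (Ioo 0 1) := by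
  intro x hx y hy hxy
  have hx0 : 0 ≤ x := hx.1.le
  have hexp : 0 ≤ β / α - 1 := sub_nonneg.2 ((one_le_div₀ hα).2 hαβ)
  have hy_lt : 0 < 1 - y ^ α⁻¹ := sub_pos.2 (rpow_lt_one hy.1.le hy.2 (inv_pos.2 hα))
  have one_sub_le : 1 - y ^ α⁻¹ ≤ 1 - x ^ α⁻¹ := by gcongr
  have hfactor : (1 - x ^ α⁻¹) ^ (γ - 1) ≤ (1 - y ^ α⁻¹) ^ (γ - 1) :=
    rpow_le_rpow_of_nonpos hy_lt one_sub_le (by linarith)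
  have := Gamma_pos_of_pos hγ
  have := rpow_nonneg (hy_lt.le.trans one_sub_le) (γ - 1)
  have := rpow_nonneg hy.1.le (β / α - 1)
  unfold mittagLefflerKernel
  gcongr

lemma tendsto_Gamma_div_Gamma_add (hα : 0 < α) (hβ : 0 < β) (hγ : 0 < γ) :
    Tendsto (fun k : ℕ ↦ Gamma (α * k + β) / Gamma (α * k + β + γ)) atTop (𝓝 0) := by
  have hK := intervalIntegrable_mittagLefflerKernel hα hβ hγ
  have hlim : Tendsto (fun k : ℕ ↦ ∫ y in (0 : ℝ)..1, mittagLefflerKernel α β γ y * y ^ k) atTop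
      (𝓝 (∫ _ in (0 : ℝ)..1, (0 : ℝ))) := by
    refine tendsto_integral_filter_of_dominated_convergence (fun y ↦ ‖mittagLefflerKernel α β γ y‖)
      (.of_forall fun k ↦ ?_) (.of_forall fun k ↦ ?_) hK.norm ?_
    · exact (hK.mul_continuousOn (continuous_pow k).continuousOn).def'.aestronglyMeasurable
    · refine ae_of_all _ fun y hy ↦ ?_
      rw [uIoc_of_le zero_le_one] at hy
      rw [norm_mul, norm_pow, norm_of_nonneg hy.1.le]
      exact mul_le_of_le_one_right (norm_nonneg _) (pow_le_one₀ hy.1.le hy.2)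
    · filter_upwards [Measure.ae_ne volume 1] with y hy1 hy
      rw [uIoc_of_le zero_le_one] at hy
      simpa only [mul_zero] using
        (tendsto_pow_atTop_nhds_zero_of_lt_one hy.1.le (hy.2.lt_of_ne hy1)).const_mul _
  simpa only [integral_mittagLefflerKernel_mul_pow hα hβ hγ, intervalIntegral.integral_zero]
    using hlim

end Kernel

section Series

variable {α β γ : ℝ}

lemma Gamma_mul_natCast_add_pos (hα : 0 < α) (hβ : 0 < β) (k : ℕ) : 0 < Gamma (α * k + β) :=
  Gamma_pos_of_pos (by positivity)

lemma summable_mittagLefflerTwo (hα : 0 < α) (hβ : 0 < β) (z : ℝ) :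
    Summable fun k : ℕ ↦ z ^ k / Gamma (α * k + β) := by
  rcases eq_or_ne z 0 with rfl | hz
  · exact summable_of_ne_finset_zero (s := {0}) fun k hk ↦ by
      rw [zero_pow (Finset.notMem_singleton.1 hk), zero_div]
  have hG := Gamma_mul_natCast_add_pos hα hβ
  have ratio_tendsto : Tendsto
      (fun k : ℕ ↦ |z| * (Gamma (α * k + β) / Gamma (α * k + β + α))) atTop (𝓝 0) := by
    simpa only [mul_zero] using (tendsto_Gamma_div_Gamma_add hα hβ hα).const_mul |z|
  refine summable_of_ratio_test_tendsto_lt_one zero_lt_one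
    (.of_forall fun k ↦ div_ne_zero (pow_ne_zero k hz) (hG k).ne') (ratio_tendsto.congr fun k ↦ ?_)
  have hnext : α * ((k + 1 : ℕ) : ℝ) + β = α * k + β + α := by push_cast; ring
  have hG_next := hG (k + 1)
  rw [hnext] at hG_next ⊢
  rw [norm_div, norm_div, norm_pow, norm_pow, norm_of_nonneg (hG k).le, norm_of_nonneg hG_next.le,
    norm_eq_abs]
  have := abs_pos.2 hz
  have := hG k
  field_simp
  ring

lemma continuous_mittagLefflerTwo (hα : 0 < α) (hβ : 0 < β) :
    Continuous (mittagLefflerTwo α β) := by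
  rw [continuous_iff_continuousAt]
  intro z
  have continuousOn_ball : ContinuousOn (mittagLefflerTwo α β) (Metric.ball 0 (|z| + 1)) := by
    refine continuousOn_tsum (fun k ↦ by fun_prop) (summable_mittagLefflerTwo hα hβ (|z| + 1))
      fun k w hw ↦ ?_
    have hG := Gamma_mul_natCast_add_pos hα hβ k
    rw [norm_div, norm_pow, norm_of_nonneg hG.le]
    have : ‖w‖ ≤ |z| + 1 := (mem_ball_zero_iff.1 hw).le
    gcongr
  exact continuousOn_ball.continuousAt (Metric.isOpen_ball.mem_nhds (by simp))

lemma mittagLefflerTwo_eq_inv_add_mul (hα : 0 < α) (hβ : 0 < β) (z : ℝ) :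
    mittagLefflerTwo α β z = (Gamma β)⁻¹ + z * mittagLefflerTwo α (β + α) z := by
  simp only [mittagLefflerTwo]
  rw [(summable_mittagLefflerTwo hα hβ z).tsum_eq_zero_add, ← tsum_mul_left]
  congr 1
  · simp
  · refine tsum_congr fun k ↦ ?_
    rw [pow_succ', mul_div_assoc]
    congr 3
    push_cast
    ring

lemma integral_mittagLefflerKernel_mul_mittagLefflerTwo (hα : 0 < α) (hβ : 0 < β) (hγ : 0 < γ)
    (z : ℝ) :
    ∫ y in (0 : ℝ)..1, mittagLefflerKernel α β γ y * mittagLefflerTwo α β (z * y) =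
      mittagLefflerTwo α (β + γ) z := by
  have hK := intervalIntegrable_mittagLefflerKernel hα hβ hγ
  have hG := Gamma_mul_natCast_add_pos hα hβ
  let term (k : ℕ) (y : ℝ) : ℝ := mittagLefflerKernel α β γ y * ((z * y) ^ k / Gamma (α * k + β))
  have integral_term (k : ℕ) : ∫ y in (0 : ℝ)..1, term k y = z ^ k / Gamma (α * k + (β + γ)) := by
    have term_eq : term k =
        fun y ↦ z ^ k / Gamma (α * k + β) * (mittagLefflerKernel α β γ y * y ^ k) := by
      ext y
      simp only [term]
      ring
    have := hG k
    rw [term_eq, intervalIntegral.integral_const_mul,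
      integral_mittagLefflerKernel_mul_pow hα hβ hγ, add_assoc]
    field_simp
  have hsum := hasSum_integral_of_dominated_convergence (μ := volume) (a := 0) (b := 1) (F := term)
    (f := fun y ↦ mittagLefflerKernel α β γ y * mittagLefflerTwo α β (z * y))
    (fun k y ↦ ‖mittagLefflerKernel α β γ y‖ * (|z| ^ k / Gamma (α * k + β)))
    (fun k ↦ (hK.mul_continuousOn (by fun_prop)).def'.aestronglyMeasurable)
    (fun k ↦ ae_of_all _ fun y hy ↦ ?_)
    (ae_of_all _ fun y _ ↦ (summable_mittagLefflerTwo hα hβ |z|).mul_left _)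
    (by simpa only [tsum_mul_left] using hK.norm.mul_const _)
    (ae_of_all _ fun y _ ↦ (summable_mittagLefflerTwo hα hβ (z * y)).hasSum.mul_left _)
  · rw [← hsum.tsum_eq, mittagLefflerTwo]
    exact tsum_congr integral_term
  · rw [uIoc_of_le zero_le_one] at hy
    have hzy : |z * y| ≤ |z| := by
      rw [abs_mul, abs_of_nonneg hy.1.le]
      exact mul_le_of_le_one_right (abs_nonneg z) hy.2
    have := hG k
    rw [norm_mul, norm_div, norm_pow, norm_of_nonneg this.le, norm_eq_abs (z * y)]
    gcongr

end Series

section Volterra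

lemma exists_isLeast_nonpos {g : ℝ → ℝ} (hg : Continuous g) {a x : ℝ} (hax : a ≤ x)
    (hgx : g x ≤ 0) : ∃ b, IsLeast {y | a ≤ y ∧ g y ≤ 0} b := by
  have isCompact_nonpos : IsCompact {y | y ∈ Icc a x ∧ g y ≤ 0} :=
    isCompact_Icc.inter_right (isClosed_le hg continuous_const)
  obtain ⟨b, ⟨⟨hab, hbx⟩, hgb⟩, hb⟩ := isCompact_nonpos.exists_isLeast ⟨x, ⟨hax, le_rfl⟩, hgx⟩
  refine ⟨b, ⟨hab, hgb⟩, fun y ⟨hay, hgy⟩ ↦ ?_⟩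
  rcases le_total y x with hyx | hxy
  · exact hb ⟨⟨hay, hyx⟩, hgy⟩
  · exact hbx.trans hxy

variable {k : ℝ → ℝ}

lemma exists_forall_integral_tail_lt {a b ε : ℝ} (hab : a < b) (hε : 0 < ε)
    (hk : IntervalIntegrable k volume a b) :
    ∃ r ∈ Ioo a b, ∀ s ∈ Icc r b, ∫ y in s..b, k y < ε := by
  have hcont : ContinuousOn (fun s ↦ ∫ y in s..b, k y) (Icc a b) := by
    simp only [integral_symm b]
    rw [← uIcc_of_le hab.le]
    exact (continuousOn_primitive_interval' hk right_mem_uIcc).neg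
  have htendsto := hcont b (right_mem_Icc.2 hab.le)
  rw [ContinuousWithinAt, integral_same, nhdsWithin_Icc_eq_nhdsLE hab] at htendsto
  obtain ⟨l, hlb, hl⟩ := mem_nhdsLE_iff_exists_Icc_subset.1 (htendsto.eventually_lt_const hε)
  obtain ⟨r, hr, hrb⟩ := exists_between (max_lt hab hlb)
  obtain ⟨har, hlr⟩ := max_lt_iff.1 hr
  exact ⟨r, ⟨har, hrb⟩, fun s hs ↦ hl ⟨hlr.le.trans hs.1, hs.2⟩⟩

lemma integral_mul_le_of_monotoneOn (hk : IntervalIntegrable k volume 0 1)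
    (hmono : MonotoneOn k (Ioo 0 1)) {h : ℝ → ℝ} (hh : Continuous h) {r : ℝ} (hr : r ∈ Ioo 0 1)
    (hpos : ∀ y ∈ Ioo 0 r, 0 ≤ h y) :
    ∫ y in (0 : ℝ)..r, k y * h y ≤ r * ∫ u in (0 : ℝ)..1, k u * h (r * u) := by
  have hkr : IntervalIntegrable (fun u ↦ k (r * u)) volume 0 1 := by
    have hk_head : IntervalIntegrable k volume 0 r :=
      hk.mono_set (uIcc_subset_uIcc_left (by simp [hr.1.le, hr.2.le]))
    simpa only [zero_div, div_self hr.1.ne'] using hk_head.comp_mul_left (c := r)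
  have rescale : ∫ y in (0 : ℝ)..r, k y * h y = r * ∫ u in (0 : ℝ)..1, k (r * u) * h (r * u) := by
    rw [mul_integral_comp_mul_left (f := fun y ↦ k y * h y), mul_zero, mul_one]
  rw [rescale]
  refine mul_le_mul_of_nonneg_left ?_ hr.1.le
  refine integral_mono_on_of_le_Ioo zero_le_one (hkr.mul_continuousOn (by fun_prop))
    (hk.mul_continuousOn (by fun_prop)) fun u hu ↦ ?_
  have hru : r * u < u := mul_lt_of_lt_one_left hu.1 hr.2
  have hru_pos : 0 < r * u := mul_pos hr.1 hu.1
  have hku : k (r * u) ≤ k u := hmono ⟨hru_pos, hru.trans hu.2⟩ hu hru.le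
  exact mul_le_mul_of_nonneg_right hku (hpos _ ⟨hru_pos, mul_lt_of_lt_one_right hr.1 hu.2⟩)

lemma integral_mul_le_of_le_on_tail (hk : IntervalIntegrable k volume 0 1)
    (hk0 : ∀ y ∈ Ioo 0 1, 0 ≤ k y) (hmono : MonotoneOn k (Ioo 0 1)) {h : ℝ → ℝ}
    (hh : Continuous h) {r : ℝ} (hr : r ∈ Ioo 0 1) (hpos : ∀ y ∈ Ioo 0 r, 0 ≤ h y)
    (htail : ∀ y ∈ Ioo r 1, h y ≤ h r) :
    ∫ y in (0 : ℝ)..1, k y * h y ≤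
      r * (∫ u in (0 : ℝ)..1, k u * h (r * u)) + (∫ y in r..1, k y) * h r := by
  have hr_mem : r ∈ uIcc 0 1 := by simp [hr.1.le, hr.2.le]
  have hkh : IntervalIntegrable (fun y ↦ k y * h y) volume 0 1 :=
    hk.mul_continuousOn hh.continuousOn
  have hkh_tail := hkh.mono_set (uIcc_subset_uIcc_right hr_mem)
  have hk_tail := hk.mono_set (uIcc_subset_uIcc_right hr_mem)
  rw [← integral_add_adjacent_intervals (hkh.mono_set (uIcc_subset_uIcc_left hr_mem)) hkh_tail,
    ← intervalIntegral.integral_mul_const]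
  refine add_le_add (integral_mul_le_of_monotoneOn hk hmono hh hr hpos)
    (integral_mono_on_of_le_Ioo hr.2.le hkh_tail (hk_tail.mul_const _) fun y hy ↦ ?_)
  exact mul_le_mul_of_nonneg_left (htail y hy) (hk0 y ⟨hr.1.trans hy.1, hy.2⟩)

theorem pos_of_eq_sub_mul_integral {g : ℝ → ℝ} {c : ℝ} (hc : 0 < c) (hg : Continuous g)
    (hk : IntervalIntegrable k volume 0 1) (hk0 : ∀ y ∈ Ioo 0 1, 0 ≤ k y)
    (hmono : MonotoneOn k (Ioo 0 1))
    (heq : ∀ x, 0 ≤ x → g x = c - x * ∫ y in (0 : ℝ)..1, k y * g (x * y)) {x : ℝ} (hx : 0 ≤ x) :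
    0 < g x := by
  by_contra! hgx
  obtain ⟨m, ⟨hm0, hgm⟩, hm_least⟩ := exists_isLeast_nonpos hg hx hgx
  have hg0 : g 0 = c := by simpa using heq 0 le_rfl
  have hm : 0 < m := hm0.lt_of_ne (by rintro rfl; linarith)
  have hpos : ∀ y ∈ Ico (0 : ℝ) 1, 0 < g (m * y) := fun y hy ↦ by
    by_contra! hgy
    exact (mul_lt_of_lt_one_right hm hy.2).not_ge (hm_least ⟨mul_nonneg hm0 hy.1, hgy⟩)
  have hcont : Continuous fun y ↦ g (m * y) := by fun_prop
  obtain ⟨r, hr, tail_lt⟩ := exists_forall_integral_tail_lt one_pos (one_div_pos.2 hm) hk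
  obtain ⟨s, hs, hs_max⟩ :=
    isCompact_Icc.exists_isMaxOn (nonempty_Icc.2 hr.2.le) hcont.continuousOn
  have hgs : 0 < g (m * s) :=
    (hpos r ⟨hr.1.le, hr.2⟩).trans_le (hs_max (left_mem_Icc.2 hr.2.le))
  have hs1 : s < 1 := hs.2.lt_of_ne (by rintro rfl; rw [mul_one] at hgs; linarith)
  have hs0 : 0 < s := hr.1.trans_le hs.1
  have compare := mul_le_mul_of_nonneg_left (integral_mul_le_of_le_on_tail hk hk0 hmono hcont
    ⟨hs0, hs1⟩ (fun y hy ↦ (hpos y ⟨hy.1.le, hy.2.trans hs1⟩).le)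
    (fun y hy ↦ hs_max ⟨hs.1.trans hy.1.le, hy.2.le⟩)) hm0
  have tail_mul_lt : (m * ∫ y in s..1, k y) * g (m * s) < g (m * s) :=
    mul_lt_of_lt_one_left hgs ((lt_div_iff₀' hm).1 (tail_lt s hs))
  have heq_m := heq m hm0
  have heq_ms := heq (m * s) (mul_nonneg hm0 hs0.le)
  simp only [mul_add, ← mul_assoc] at compare
  linarith

end Volterra

section Positivity

variable {α β : ℝ}

lemma mittagLefflerTwo_pos_of_nonneg (hα : 0 < α) (hβ : 0 < β) {z : ℝ} (hz : 0 ≤ z) :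
    0 < mittagLefflerTwo α β z := by
  have hG := Gamma_mul_natCast_add_pos hα hβ
  refine (summable_mittagLefflerTwo hα hβ z).tsum_pos
    (fun k ↦ div_nonneg (pow_nonneg hz k) (hG k).le) 0 ?_
  simpa only [pow_zero] using one_div_pos.2 (hG 0)

theorem mittagLefflerTwo_pos (hα : 0 < α) (hα' : α ≤ 1) (hαβ : α ≤ β) (z : ℝ) :
    0 < mittagLefflerTwo α β z := by
  have hβ : 0 < β := hα.trans_le hαβ
  rcases le_total 0 z with hz | hz
  · exact mittagLefflerTwo_pos_of_nonneg hα hβ hz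
  have volterra : ∀ x, 0 ≤ x → mittagLefflerTwo α β (-x) = (Gamma β)⁻¹ -
      x * ∫ y in (0 : ℝ)..1, mittagLefflerKernel α β α y * mittagLefflerTwo α β (-(x * y)) :=
    fun x _ ↦ by
    simp only [← neg_mul]
    rw [integral_mittagLefflerKernel_mul_mittagLefflerTwo hα hβ hα,
      mittagLefflerTwo_eq_inv_add_mul hα hβ, neg_mul, sub_eq_add_neg]
  rw [← neg_neg z]
  exact pos_of_eq_sub_mul_integral (g := fun x ↦ mittagLefflerTwo α β (-x))
    (inv_pos.2 (Gamma_pos_of_pos hβ)) ((continuous_mittagLefflerTwo hα hβ).comp continuous_neg)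
    (intervalIntegrable_mittagLefflerKernel hα hβ hα)
    (fun y hy ↦ mittagLefflerKernel_nonneg hα hα (Ioo_subset_Icc_self hy))
    (monotoneOn_mittagLefflerKernel hα hαβ hα hα') volterra (neg_nonneg.2 hz)

lemma mittagLeffler_eq_one_add_integral (hα : 0 < α) (z : ℝ) :
    mittagLeffler α z = 1 + α⁻¹ * ∫ y in (0 : ℝ)..z, mittagLefflerTwo α α y := by
  have kernel_one : mittagLefflerKernel α α 1 = fun _ ↦ α⁻¹ := by
    ext y
    simp [mittagLefflerKernel, hα.ne']
  calc mittagLeffler α z = mittagLefflerTwo α 1 z := rfl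
    _ = 1 + z * mittagLefflerTwo α (α + 1) z := by
      rw [mittagLefflerTwo_eq_inv_add_mul hα one_pos, Gamma_one, inv_one, add_comm 1 α]
    _ = 1 + α⁻¹ * (z * ∫ y in (0 : ℝ)..1, mittagLefflerTwo α α (z * y)) := by
      rw [← integral_mittagLefflerKernel_mul_mittagLefflerTwo hα hα one_pos, kernel_one,
        intervalIntegral.integral_const_mul, mul_left_comm]
    _ = 1 + α⁻¹ * ∫ y in (0 : ℝ)..z, mittagLefflerTwo α α y := by
      rw [mul_integral_comp_mul_left (f := mittagLefflerTwo α α), mul_zero, mul_one]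

lemma hasDerivAt_mittagLeffler (hα : 0 < α) (z : ℝ) :
    HasDerivAt (mittagLeffler α) (α⁻¹ * mittagLefflerTwo α α z) z := by
  rw [funext (mittagLeffler_eq_one_add_integral hα)]
  exact (((continuous_mittagLefflerTwo hα hα).integral_hasStrictDerivAt 0 z).hasDerivAt.const_mul
    α⁻¹).const_add 1

theorem strictMono_mittagLeffler (hα : 0 < α) (hα' : α ≤ 1) : StrictMono (mittagLeffler α) :=
  strictMono_of_hasDerivAt_pos (hasDerivAt_mittagLeffler hα) fun z ↦
    mul_pos (inv_pos.2 hα) (mittagLefflerTwo_pos hα hα' le_rfl z)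

end Positivity

theorem stmt10_general {ρ t₀ lam₁ : ℝ} (hρ : 0 < ρ) (hρ' : ρ ≤ 1) (ht₀ : 0 < t₀)
    (hlam₁ : 1 < lam₁) : StrictAnti fun σ : ℝ ↦ mittagLeffler ρ (-(lam₁ ^ σ * t₀ ^ ρ)) := by
  intro σ τ hστ
  refine strictMono_mittagLeffler hρ hρ' (neg_lt_neg ?_)
  exact mul_lt_mul_of_pos_right (rpow_lt_rpow_of_exponent_lt hlam₁ hστ) (rpow_pos_of_pos ht₀ ρ)

/-- For `ρ ∈ (0,1)`, `σ₀ ∈ (0,1)`, `t₀ > 1` and `λ₁ > 1` with `λ₁^{σ₀} ≥ 5Γ(1−ρ)`, the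
function `σ ↦ E_ρ(−λ₁^σ t₀^ρ)` is strictly monotonically decreasing on `[σ₀, 1)`. -/
theorem stmt10 (ρ σ₀ t₀ lam₁ : ℝ) (hρ : 0 < ρ) (hρ' : ρ < 1) (hσ₀ : 0 < σ₀) (hσ₀' : σ₀ < 1)
    (ht₀ : 1 < t₀) (hlam₁ : 1 < lam₁) (h : 5 * Real.Gamma (1 - ρ) ≤ lam₁ ^ σ₀) :
    StrictAntiOn (fun σ : ℝ => mittagLeffler ρ (-(lam₁ ^ σ * t₀ ^ ρ))) (Set.Ico σ₀ 1) :=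
  (stmt10_general hρ hρ'.le (one_pos.trans ht₀) hlam₁).strictAntiOn _
end

section
/- Let ρ ∈ (0, 1), σ₀ ∈ (0, 1), t₀ > 1, and let λ₁ > 1 satisfy λ₁^{σ₀} ≥ 5 Γ(1−ρ). Then for every d₁ > 0 there exists a unique σ ∈ (σ₀, 1) such that E_ρ(−λ₁^σ t₀^ρ) = d₁ if and only if E_ρ(−λ₁ t₀^ρ) < d₁ < E_ρ(−λ₁^{σ₀} t₀^ρ). -/
open Set Real

/-!
Since `E_ρ` is continuous, everything rests on its strict monotonicity, which on the negative
half-line is not visible from the alternating series. There, `u(t) = E_ρ(-t^ρ)` solves the Volterra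
equation `u = 1 - I^ρ u`, where `I^ρ` is the Riemann–Liouville integral. A solution of
`w = g - c I^ρ w` stays positive if `g(0) > 0` and `t^(1-ρ) g(t)` is nondecreasing: multiplied by
`t^(1-ρ)`, the equation has the kernel `t^(1-ρ) (t-s)^(ρ-1)`, which decreases in `t`, so between a
time `t` and a first zero `T` of `w` only the values of `w` on `[t, T]` can pull `w` down, and too
weakly when `t` is close to `T`. This applies to `u`, and then to `u(t) - u(t+h)`, whose forcing
term is the contribution of `[0, h]` to `I^ρ u (t+h)`.
-/

open Filter MeasureTheory Topology

section Order

theorem existsUnique_mem_Ioo_eq_iff_of_strictAntiOn {α δ : Type*}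
    [ConditionallyCompleteLinearOrder α] [DenselyOrdered α] [TopologicalSpace α] [OrderTopology α]
    [LinearOrder δ] [TopologicalSpace δ] [OrderClosedTopology δ] {f : α → δ} {a b : α} {d : δ}
    (hab : a ≤ b) (hf : StrictAntiOn f (Icc a b)) (hfc : ContinuousOn f (Icc a b)) :
    (∃! x, x ∈ Ioo a b ∧ f x = d) ↔ f b < d ∧ d < f a := by
  constructor
  · rintro ⟨x, ⟨hx, rfl⟩, -⟩
    exact ⟨hf (Ioo_subset_Icc_self hx) (right_mem_Icc.2 hab) hx.2,
      hf (left_mem_Icc.2 hab) (Ioo_subset_Icc_self hx) hx.1⟩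
  · intro hd
    obtain ⟨x, hx, rfl⟩ := intermediate_value_Ioo' hab hfc hd
    exact ⟨x, ⟨hx, rfl⟩, fun y hy ↦
      hf.injOn (Ioo_subset_Icc_self hy.1) (Ioo_subset_Icc_self hx) hy.2⟩

theorem exists_isLeast_le_of_continuousOn_Ici {α δ : Type*} [ConditionallyCompleteLinearOrder α]
    [TopologicalSpace α] [OrderTopology α] [Preorder δ] [TopologicalSpace δ] [ClosedIicTopology δ]
    {f : α → δ} {a T : α} {d : δ} (hf : ContinuousOn f (Ici a)) (haT : a ≤ T) (hT : f T ≤ d) :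
    ∃ t, IsLeast {t | a ≤ t ∧ f t ≤ d} t := by
  have hclosed : IsClosed {t | a ≤ t ∧ f t ≤ d} :=
    hf.preimage_isClosed_of_isClosed isClosed_Ici isClosed_Iic
  exact ⟨_, hclosed.isLeast_csInf ⟨T, haT, hT⟩ ⟨a, fun _ ht ↦ ht.1⟩⟩

theorem frequently_nhdsLT_forall_le_of_forall_lt {α δ : Type*}
    [ConditionallyCompleteLinearOrder α] [DenselyOrdered α] [TopologicalSpace α] [OrderTopology α]
    [LinearOrder δ] [TopologicalSpace δ] [ClosedIciTopology δ] {f : α → δ} {a T : α} (haT : a < T)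
    (hf : ContinuousOn f (Icc a T)) (hT : ∀ s ∈ Ico a T, f T < f s) :
    ∃ᶠ t in 𝓝[<] T, ∀ s ∈ Icc t T, f s ≤ f t := by
  refine frequently_iff.2 fun {U} hU ↦ ?_
  obtain ⟨l, hl, hlU⟩ := (mem_nhdsLT_iff_exists_mem_Ico_Ioo_subset haT).1 hU
  obtain ⟨b, hlb, hbT⟩ := exists_between hl.2
  have hab : a ≤ b := hl.1.trans hlb.le
  obtain ⟨t, ht, htmax⟩ := isCompact_Icc.exists_isMaxOn (nonempty_Icc.2 hbT.le)
    (hf.mono (Icc_subset_Icc_left hab))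
  have htT : t ≠ T := by
    rintro rfl
    exact (hT b ⟨hab, hbT⟩).not_ge (htmax (left_mem_Icc.2 hbT.le))
  exact ⟨t, hlU ⟨hlb.trans_le ht.1, ht.2.lt_of_ne htT⟩,
    fun s hs ↦ htmax ⟨ht.1.trans hs.1, hs.2⟩⟩

end Order

section Rpow

theorem rpow_one_sub_mul_rpow_sub_one_le {ρ : ℝ} (hρ : ρ ≤ 1) {a b a' b' : ℝ} (ha : 0 ≤ a)
    (hb : 0 < b) (ha' : 0 ≤ a') (hb' : 0 < b') (hab : a * b' ≤ a' * b) :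
    a ^ (1 - ρ) * b ^ (ρ - 1) ≤ a' ^ (1 - ρ) * b' ^ (ρ - 1) := by
  have hquot : ∀ {x y : ℝ}, 0 ≤ x → 0 < y → x ^ (1 - ρ) * y ^ (ρ - 1) = (x / y) ^ (1 - ρ) := by
    intro x y hx hy
    rw [div_rpow hx hy.le, ← neg_sub 1 ρ, rpow_neg hy.le, div_eq_mul_inv]
  rw [hquot ha hb, hquot ha' hb']
  exact rpow_le_rpow (by positivity) ((div_le_div_iff₀ hb hb').2 hab) (sub_nonneg.2 hρ)

theorem eventually_nhdsLT_mul_sub_rpow_lt_rpow {ρ : ℝ} (hρ : 0 < ρ) (C r : ℝ) {T : ℝ}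
    (hT : 0 < T) :
    ∀ᶠ t in 𝓝[<] T, C * (T - t) ^ ρ < t ^ r := by
  have hleft : ContinuousAt (fun t ↦ C * (T - t) ^ ρ) T :=
    (((continuous_const.sub continuous_id).rpow_const fun _ ↦ .inr hρ.le).const_mul C).continuousAt
  have hright : ContinuousAt (fun t : ℝ ↦ t ^ r) T := continuousAt_rpow_const T r (.inl hT.ne')
  refine nhdsWithin_le_nhds (hleft.eventually_lt hright ?_)
  simpa [zero_rpow hρ.ne'] using rpow_pos_of_pos hT r

end Rpow

section Gamma

theorem rpow_mul_exp_neg_le_Gamma_add_one {s M : ℝ} (hs : 0 ≤ s) (hM : 0 ≤ M) :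
    M ^ s * exp (-M) ≤ Gamma (s + 1) := by
  have hint := GammaIntegral_convergent (s := s + 1) (by linarith)
  have hsub : Ioi M ⊆ Ioi 0 := Ioi_subset_Ioi hM
  calc M ^ s * exp (-M)
      = ∫ x in Ioi M, M ^ s * exp (-x) := by rw [integral_const_mul, integral_exp_neg_Ioi]
    _ ≤ ∫ x in Ioi M, exp (-x) * x ^ (s + 1 - 1) := by
        refine setIntegral_mono_on ((integrableOn_exp_neg_Ioi M).const_mul _)
          (hint.mono_set hsub) measurableSet_Ioi fun x (hx : M < x) ↦ ?_
        rw [mul_comm, add_sub_cancel_right]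
        gcongr
    _ ≤ ∫ x in Ioi 0, exp (-x) * x ^ (s + 1 - 1) := by
        refine setIntegral_mono_set hint ?_ hsub.eventuallyLE
        filter_upwards [self_mem_ae_restrict measurableSet_Ioi] with x (hx : 0 < x)
        exact mul_nonneg (exp_nonneg _) (rpow_nonneg hx.le _)
    _ = Gamma (s + 1) := (Gamma_eq_integral (by linarith)).symm

theorem integral_sub_rpow_mul_rpow {ρ a t : ℝ} (hρ : 0 < ρ) (ha : 0 < a) (ht : 0 < t) :
    ∫ s in (0:ℝ)..t, (t - s) ^ (ρ - 1) * s ^ (a - 1) =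
      t ^ (a + ρ - 1) * (Gamma a * Gamma ρ / Gamma (a + ρ)) := by
  have hreal : ∫ x in (0:ℝ)..t, (x : ℂ) ^ ((a : ℂ) - 1) * ((t : ℂ) - x) ^ ((ρ : ℂ) - 1) =
      ((∫ s in (0:ℝ)..t, (t - s) ^ (ρ - 1) * s ^ (a - 1) : ℝ) : ℂ) := by
    rw [← intervalIntegral.integral_ofReal]
    refine intervalIntegral.integral_congr fun s hs ↦ ?_
    rw [uIcc_of_le ht.le] at hs
    simp only [Complex.ofReal_mul, Complex.ofReal_cpow hs.1,
      Complex.ofReal_cpow (sub_nonneg.2 hs.2), Complex.ofReal_sub, Complex.ofReal_one, mul_comm]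
  have hpow : (t : ℂ) ^ ((a : ℂ) + ρ - 1) = ((t ^ (a + ρ - 1) : ℝ) : ℂ) := by
    simp [Complex.ofReal_cpow ht.le]
  have hbeta := congrArg Complex.re (Complex.betaIntegral_scaled a ρ ht)
  rwa [hreal, hpow, Complex.ofReal_re, Complex.re_ofReal_mul,
    ← ProbabilityTheory.beta_eq_betaIntegralReal a ρ ha hρ] at hbeta

end Gamma

section FracIntegral

variable {ρ : ℝ}

/-- The Riemann–Liouville fractional integral `I^ρ w` of order `ρ` based at `0`. -/
noncomputable def fracIntegral (ρ : ℝ) (w : ℝ → ℝ) (t : ℝ) : ℝ :=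
  (Gamma ρ)⁻¹ * ∫ s in (0:ℝ)..t, (t - s) ^ (ρ - 1) * w s

/-- The memory term of the Riemann–Liouville integral: the contribution of the values of `w` on
`[0, h]` to `fracIntegral ρ w (t + h)`. The argument `t` is the time elapsed since `h`. -/
noncomputable def fracMemory (ρ h : ℝ) (w : ℝ → ℝ) (t : ℝ) : ℝ :=
  (Gamma ρ)⁻¹ * ∫ s in (0:ℝ)..h, (t + h - s) ^ (ρ - 1) * w s

@[simp]
theorem fracIntegral_zero_right (w : ℝ → ℝ) : fracIntegral ρ w 0 = 0 := by
  simp [fracIntegral]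

theorem fracMemory_zero_right (h : ℝ) (w : ℝ → ℝ) :
    fracMemory ρ h w 0 = fracIntegral ρ w h := by
  simp [fracMemory, fracIntegral]

theorem fracIntegral_const_mul (c : ℝ) (w : ℝ → ℝ) (t : ℝ) :
    fracIntegral ρ (fun s ↦ c * w s) t = c * fracIntegral ρ w t := by
  simp only [fracIntegral, mul_left_comm _ c, intervalIntegral.integral_const_mul]

theorem fracIntegral_congr {v w : ℝ → ℝ} {t : ℝ} (ht : 0 ≤ t) (h : EqOn v w (Icc 0 t)) :
    fracIntegral ρ v t = fracIntegral ρ w t := by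
  refine congrArg _ (intervalIntegral.integral_congr fun s hs ↦ ?_)
  rw [uIcc_of_le ht] at hs
  simp only [h hs]

theorem intervalIntegrable_sub_rpow_mul (hρ : 0 < ρ) (x : ℝ) {a b : ℝ} {w : ℝ → ℝ}
    (hw : ContinuousOn w (uIcc a b)) :
    IntervalIntegrable (fun s ↦ (x - s) ^ (ρ - 1) * w s) volume a b := by
  have hkernel : IntervalIntegrable (fun s ↦ (x - s) ^ (ρ - 1)) volume a b := by
    simpa using (intervalIntegral.intervalIntegrable_rpow' (a := x - a) (b := x - b)
      (r := ρ - 1) (by linarith)).comp_sub_left x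
  exact hkernel.mul_continuousOn hw

theorem fracIntegral_sub (hρ : 0 < ρ) {v w : ℝ → ℝ} {t : ℝ} (hv : ContinuousOn v (uIcc 0 t))
    (hw : ContinuousOn w (uIcc 0 t)) :
    fracIntegral ρ (fun s ↦ v s - w s) t = fracIntegral ρ v t - fracIntegral ρ w t := by
  simp only [fracIntegral, mul_sub]
  rw [intervalIntegral.integral_sub (intervalIntegrable_sub_rpow_mul hρ t hv)
    (intervalIntegrable_sub_rpow_mul hρ t hw), mul_sub]

theorem fracIntegral_mono (hρ : 0 < ρ) {v w : ℝ → ℝ} {t : ℝ} (ht : 0 ≤ t)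
    (hv : ContinuousOn v (Icc 0 t)) (hw : ContinuousOn w (Icc 0 t))
    (hvw : ∀ s ∈ Ioo 0 t, v s ≤ w s) : fracIntegral ρ v t ≤ fracIntegral ρ w t := by
  rw [← uIcc_of_le ht] at hv hw
  have hΓ := Gamma_pos_of_pos hρ
  refine mul_le_mul_of_nonneg_left ?_ (inv_nonneg.2 hΓ.le)
  refine intervalIntegral.integral_mono_on_of_le_Ioo ht (intervalIntegrable_sub_rpow_mul hρ t hv)
    (intervalIntegrable_sub_rpow_mul hρ t hw) fun s hs ↦ ?_
  exact mul_le_mul_of_nonneg_left (hvw s hs) (rpow_nonneg (sub_nonneg.2 hs.2.le) _)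

theorem fracIntegral_pos (hρ : 0 < ρ) {w : ℝ → ℝ} {t : ℝ} (ht : 0 < t)
    (hw : ContinuousOn w (Icc 0 t)) (hpos : ∀ s ∈ Ioo 0 t, 0 < w s) : 0 < fracIntegral ρ w t := by
  rw [← uIcc_of_le ht.le] at hw
  refine mul_pos (inv_pos.2 (Gamma_pos_of_pos hρ)) ?_
  exact intervalIntegral.intervalIntegral_pos_of_pos_on (intervalIntegrable_sub_rpow_mul hρ t hw)
    (fun s hs ↦ mul_pos (rpow_pos_of_pos (sub_pos.2 hs.2) _) (hpos s hs)) ht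

theorem fracIntegral_rpow (hρ : 0 < ρ) {a t : ℝ} (ha : -1 < a) (ht : 0 < t) :
    fracIntegral ρ (fun s ↦ s ^ a) t = Gamma (a + 1) / Gamma (a + ρ + 1) * t ^ (a + ρ) := by
  have hbeta := integral_sub_rpow_mul_rpow hρ (a := a + 1) (by linarith) ht
  rw [add_sub_cancel_right] at hbeta
  rw [fracIntegral, hbeta, add_right_comm a 1 ρ, add_sub_cancel_right]
  field_simp [(Gamma_pos_of_pos hρ).ne']

theorem fracIntegral_const (hρ : 0 < ρ) (c : ℝ) {t : ℝ} (ht : 0 < t) :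
    fracIntegral ρ (fun _ ↦ c) t = c * (t ^ ρ / Gamma (ρ + 1)) := by
  have hone := fracIntegral_rpow hρ (a := 0) (by norm_num) ht
  simp only [rpow_zero, zero_add, Gamma_one] at hone
  rw [← one_div_mul_eq_div, ← hone, ← fracIntegral_const_mul, mul_one]

theorem fracIntegral_add_right (hρ : 0 < ρ) {w : ℝ → ℝ} {t h : ℝ} (ht : 0 ≤ t) (hh : 0 ≤ h)
    (hw : ContinuousOn w (Icc 0 (t + h))) :
    fracIntegral ρ w (t + h) = fracMemory ρ h w t + fracIntegral ρ (fun s ↦ w (s + h)) t := by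
  have hth : h ≤ t + h := le_add_of_nonneg_left ht
  have hshift : ∫ s in h..(t + h), (t + h - s) ^ (ρ - 1) * w s =
      ∫ s in (0:ℝ)..t, (t - s) ^ (ρ - 1) * w (s + h) := by
    simpa using (intervalIntegral.integral_comp_add_right (a := 0) (b := t)
      (fun s ↦ (t + h - s) ^ (ρ - 1) * w s) h).symm
  have hleft : ContinuousOn w (uIcc 0 h) := by
    rw [uIcc_of_le hh]; exact hw.mono (Icc_subset_Icc_right hth)
  have hright : ContinuousOn w (uIcc h (t + h)) := by
    rw [uIcc_of_le hth]; exact hw.mono (Icc_subset_Icc_left hh)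
  rw [fracIntegral, fracMemory, fracIntegral, ← intervalIntegral.integral_add_adjacent_intervals
    (intervalIntegrable_sub_rpow_mul hρ _ hleft) (intervalIntegrable_sub_rpow_mul hρ _ hright),
    hshift, mul_add]

theorem hasSum_fracIntegral {ι : Type*} [Countable ι] (hρ : 0 < ρ) {f : ι → ℝ → ℝ} {F : ℝ → ℝ}
    {b : ι → ℝ} {t : ℝ} (ht : 0 ≤ t) (hf : ∀ k, ContinuousOn (f k) (Icc 0 t)) (hb : Summable b)
    (hfb : ∀ k, ∀ s ∈ Icc 0 t, |f k s| ≤ b k)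
    (hF : ∀ s ∈ Icc 0 t, HasSum (fun k ↦ f k s) (F s)) :
    HasSum (fun k ↦ fracIntegral ρ (f k) t) (fracIntegral ρ F t) := by
  have hIoc : ∀ s ∈ uIoc 0 t, s ∈ Icc 0 t := fun s hs ↦ by
    rw [uIoc_of_le ht] at hs
    exact Ioc_subset_Icc_self hs
  suffices hint : HasSum (fun k ↦ ∫ s in (0:ℝ)..t, (t - s) ^ (ρ - 1) * f k s)
      (∫ s in (0:ℝ)..t, (t - s) ^ (ρ - 1) * F s) from hint.mul_left _
  refine intervalIntegral.hasSum_integral_of_dominated_convergence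
    (fun k s ↦ (t - s) ^ (ρ - 1) * b k) (fun k ↦ ?_) (fun k ↦ ?_) ?_ ?_ ?_
  · have hfk : ContinuousOn (f k) (uIcc 0 t) := by rw [uIcc_of_le ht]; exact hf k
    have hint := intervalIntegrable_sub_rpow_mul hρ t hfk
    exact (intervalIntegrable_iff.1 hint).aestronglyMeasurable
  · refine .of_forall fun s hs ↦ ?_
    have hker : 0 ≤ (t - s) ^ (ρ - 1) := rpow_nonneg (sub_nonneg.2 (hIoc s hs).2) _
    rw [norm_mul, norm_of_nonneg hker]
    exact mul_le_mul_of_nonneg_left (hfb k s (hIoc s hs)) hker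
  · exact .of_forall fun s _ ↦ hb.mul_left _
  · simp_rw [tsum_mul_left]
    exact intervalIntegrable_sub_rpow_mul hρ t continuousOn_const
  · exact .of_forall fun s hs ↦ (hF s (hIoc s hs)).mul_left _

theorem mul_fracMemory_le_mul_fracMemory (hρ : 0 < ρ) {w : ℝ → ℝ} {h a t a' t' : ℝ} (hh : 0 ≤ h)
    (hw : ContinuousOn w (Icc 0 h)) (hw0 : ∀ s ∈ Ioo 0 h, 0 ≤ w s)
    (hker : ∀ s ∈ Ioo 0 h, a * (t + h - s) ^ (ρ - 1) ≤ a' * (t' + h - s) ^ (ρ - 1)) :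
    a * fracMemory ρ h w t ≤ a' * fracMemory ρ h w t' := by
  rw [← uIcc_of_le hh] at hw
  rw [fracMemory, fracMemory, mul_left_comm, mul_left_comm a',
    ← intervalIntegral.integral_const_mul a, ← intervalIntegral.integral_const_mul a']
  refine mul_le_mul_of_nonneg_left ?_ (inv_nonneg.2 (Gamma_pos_of_pos hρ).le)
  refine intervalIntegral.integral_mono_on_of_le_Ioo hh
    ((intervalIntegrable_sub_rpow_mul hρ _ hw).const_mul a)
    ((intervalIntegrable_sub_rpow_mul hρ _ hw).const_mul a') fun s hs ↦ ?_
  simpa only [mul_assoc] using mul_le_mul_of_nonneg_right (hker s hs) (hw0 s hs)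

theorem monotoneOn_rpow_mul_fracMemory (hρ : 0 < ρ) (hρ1 : ρ ≤ 1) {w : ℝ → ℝ} {h : ℝ}
    (hh : 0 ≤ h) (hw : ContinuousOn w (Icc 0 h)) (hw0 : ∀ s ∈ Ioo 0 h, 0 ≤ w s) :
    MonotoneOn (fun t ↦ t ^ (1 - ρ) * fracMemory ρ h w t) (Ici 0) := by
  intro t (ht : 0 ≤ t) t' (ht' : 0 ≤ t') htt'
  refine mul_fracMemory_le_mul_fracMemory hρ hh hw hw0 fun s hs ↦ ?_
  have hhs : 0 < h - s := sub_pos.2 hs.2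
  exact rpow_one_sub_mul_rpow_sub_one_le hρ1 ht (by linarith) ht' (by linarith) (by nlinarith)

theorem add_rpow_mul_fracMemory_le (hρ : 0 < ρ) (hρ1 : ρ ≤ 1) {w : ℝ → ℝ} {h t : ℝ}
    (hh : 0 ≤ h) (ht : 0 ≤ t) (hw : ContinuousOn w (Icc 0 h)) (hw0 : ∀ s ∈ Ioo 0 h, 0 ≤ w s) :
    (t + h) ^ (1 - ρ) * fracMemory ρ h w t ≤ h ^ (1 - ρ) * fracIntegral ρ w h := by
  rw [← fracMemory_zero_right]
  refine mul_fracMemory_le_mul_fracMemory hρ hh hw hw0 fun s hs ↦ ?_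
  have hhs : 0 < h - s := sub_pos.2 hs.2
  exact rpow_one_sub_mul_rpow_sub_one_le hρ1 (by linarith) (by linarith) hh (by linarith)
    (by nlinarith [hs.1])

theorem rpow_mul_fracIntegral_le (hρ : 0 < ρ) (hρ1 : ρ ≤ 1) {w : ℝ → ℝ} {t T M : ℝ}
    (ht : 0 ≤ t) (htT : t < T) (hw : ContinuousOn w (Icc 0 T)) (hw0 : ∀ s ∈ Ioo 0 t, 0 ≤ w s)
    (hM : ∀ s ∈ Ioo t T, w s ≤ M) :
    T ^ (1 - ρ) * fracIntegral ρ w T ≤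
      t ^ (1 - ρ) * fracIntegral ρ w t + T ^ (1 - ρ) * (M * ((T - t) ^ ρ / Gamma (ρ + 1))) := by
  obtain ⟨δ, hδ, rfl⟩ : ∃ δ, 0 < δ ∧ T = δ + t := ⟨T - t, by linarith, by ring⟩
  have hpast : (δ + t) ^ (1 - ρ) * fracMemory ρ t w δ ≤ t ^ (1 - ρ) * fracIntegral ρ w t :=
    add_rpow_mul_fracMemory_le hρ hρ1 ht hδ.le (hw.mono (Icc_subset_Icc_right htT.le)) hw0
  have hrecent : fracIntegral ρ (fun s ↦ w (s + t)) δ ≤ M * (δ ^ ρ / Gamma (ρ + 1)) := by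
    rw [← fracIntegral_const hρ M hδ]
    refine fracIntegral_mono hρ hδ.le ?_ continuousOn_const fun s hs ↦
      hM _ ⟨by linarith [hs.1], by linarith [hs.2]⟩
    exact hw.comp (by fun_prop) fun s hs ↦ ⟨by linarith [hs.1], by linarith [hs.2]⟩
  have hT : 0 ≤ (δ + t) ^ (1 - ρ) := rpow_nonneg (by linarith) _
  rw [fracIntegral_add_right hρ hδ.le ht hw, mul_add, add_sub_cancel_right]
  exact add_le_add hpast (mul_le_mul_of_nonneg_left hrecent hT)

end FracIntegral

section Volterra

variable {ρ c : ℝ}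

theorem pos_of_eq_sub_fracIntegral (hρ : 0 < ρ) (hρ1 : ρ ≤ 1) (hc : 0 ≤ c) {w g : ℝ → ℝ}
    (hw : ContinuousOn w (Ici 0)) (hwg : ∀ t, 0 ≤ t → w t = g t - c * fracIntegral ρ w t)
    (hg0 : 0 < g 0) (hg : MonotoneOn (fun t ↦ t ^ (1 - ρ) * g t) (Ioi 0)) {t : ℝ} (ht : 0 ≤ t) :
    0 < w t := by
  by_contra! hwt
  obtain ⟨T, ⟨hT0, hwT⟩, hTle⟩ := exists_isLeast_le_of_continuousOn_Ici hw ht hwt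
  have hpos : ∀ s, 0 ≤ s → s < T → 0 < w s := fun s hs hsT ↦
    not_le.1 fun hws ↦ hsT.not_ge (hTle ⟨hs, hws⟩)
  have hT : 0 < T := hT0.lt_of_ne <| by
    rintro rfl
    simp [hwg, hg0.not_ge] at hwT
  have hwIcc : ContinuousOn w (Icc 0 T) := hw.mono Icc_subset_Ici_self
  -- As `w ≤ w t` on `[t, T]`, the integral over `[t, T]` is at most a small multiple of `w t`.
  obtain ⟨t, hmax, hsmall, ht0, htT⟩ :=
    ((frequently_nhdsLT_forall_le_of_forall_lt hT hwIcc fun s hs ↦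
      hwT.trans_lt (hpos s hs.1 hs.2)).and_eventually
      ((eventually_nhdsLT_mul_sub_rpow_lt_rpow hρ (c * T ^ (1 - ρ) / Gamma (ρ + 1)) (1 - ρ) hT).and
        (Ioo_mem_nhdsLT hT))).exists
  have hI := rpow_mul_fracIntegral_le hρ hρ1 ht0.le htT hwIcc
    (fun s hs ↦ (hpos s hs.1.le (hs.2.trans htT)).le) fun s hs ↦ hmax s (Ioo_subset_Icc_self hs)
  have hcontra : 0 < T ^ (1 - ρ) * w T := calc
    0 < (t ^ (1 - ρ) - c * T ^ (1 - ρ) / Gamma (ρ + 1) * (T - t) ^ ρ) * w t :=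
        mul_pos (sub_pos.2 hsmall) (hpos t ht0.le htT)
    _ = t ^ (1 - ρ) * g t - c * (t ^ (1 - ρ) * fracIntegral ρ w t +
          T ^ (1 - ρ) * (w t * ((T - t) ^ ρ / Gamma (ρ + 1)))) := by
        linear_combination t ^ (1 - ρ) * hwg t ht0.le
    _ ≤ T ^ (1 - ρ) * g T - c * (T ^ (1 - ρ) * fracIntegral ρ w T) :=
        sub_le_sub (hg ht0 hT htT.le) (mul_le_mul_of_nonneg_left hI hc)
    _ = T ^ (1 - ρ) * w T := by rw [hwg T hT0]; ring
  exact hcontra.not_ge (mul_nonpos_of_nonneg_of_nonpos (rpow_nonneg hT0 _) hwT)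

theorem sub_shift_eq_of_eq_sub_fracIntegral (hρ : 0 < ρ) {u : ℝ → ℝ} {a h t : ℝ}
    (hu : ContinuousOn u (Ici 0)) (hua : ∀ t, 0 ≤ t → u t = a - c * fracIntegral ρ u t)
    (hh : 0 ≤ h) (ht : 0 ≤ t) :
    u t - u (t + h) =
      c * fracMemory ρ h u t - c * fracIntegral ρ (fun s ↦ u s - u (s + h)) t := by
  have hshift : ContinuousOn (fun s ↦ u (s + h)) (Icc 0 t) :=
    hu.comp (by fun_prop) fun s hs ↦ add_nonneg hs.1 hh
  rw [hua t ht, hua (t + h) (add_nonneg ht hh),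
    fracIntegral_add_right hρ ht hh (hu.mono Icc_subset_Ici_self), fracIntegral_sub hρ]
  · ring
  · rw [uIcc_of_le ht]; exact hu.mono Icc_subset_Ici_self
  · rwa [uIcc_of_le ht]

theorem strictAntiOn_of_eq_sub_fracIntegral (hρ : 0 < ρ) (hρ1 : ρ ≤ 1) (hc : 0 < c) {u : ℝ → ℝ}
    {a : ℝ} (ha : 0 < a) (hu : ContinuousOn u (Ici 0))
    (hua : ∀ t, 0 ≤ t → u t = a - c * fracIntegral ρ u t) : StrictAntiOn u (Ici 0) := by
  have hpos : ∀ t, 0 ≤ t → 0 < u t := fun t ↦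
    pos_of_eq_sub_fracIntegral (g := fun _ ↦ a) hρ hρ1 hc.le hu hua ha fun s hs _ _ hss' ↦
      mul_le_mul_of_nonneg_right (rpow_le_rpow (le_of_lt hs) hss' (sub_nonneg.2 hρ1)) ha.le
  intro t (ht : 0 ≤ t) t' _ htt'
  obtain ⟨h, hh, rfl⟩ : ∃ h, 0 < h ∧ t' = t + h := ⟨t' - t, sub_pos.2 htt', by ring⟩
  have huh : ContinuousOn u (Icc 0 h) := hu.mono Icc_subset_Ici_self
  have hshift : ContinuousOn (fun s ↦ u s - u (s + h)) (Ici 0) :=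
    hu.sub (hu.comp (by fun_prop) fun s (hs : 0 ≤ s) ↦ add_nonneg hs hh.le)
  have hforcing0 : 0 < c * fracMemory ρ h u 0 := by
    rw [fracMemory_zero_right]
    exact mul_pos hc (fracIntegral_pos hρ hh huh fun s hs ↦ hpos s hs.1.le)
  have hforcing : MonotoneOn (fun s ↦ s ^ (1 - ρ) * (c * fracMemory ρ h u s)) (Ioi 0) := by
    simp only [mul_left_comm _ c]
    have hmemory := (monotoneOn_rpow_mul_fracMemory hρ hρ1 hh.le huh fun s hs ↦
      (hpos s hs.1.le).le).mono Ioi_subset_Ici_self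
    exact fun s hs s' hs' hss' ↦ mul_le_mul_of_nonneg_left (hmemory hs hs' hss') hc.le
  exact sub_pos.1 (pos_of_eq_sub_fracIntegral hρ hρ1 hc.le hshift
    (fun s hs ↦ sub_shift_eq_of_eq_sub_fracIntegral hρ hu hua hh.le hs) hforcing0 hforcing ht)

end Volterra

section MittagLeffler

variable {ρ : ℝ}

-- The constants come from `M = (2 * R) ^ (1 / ρ)` in the lower bound `M ^ s * exp (-M)` for
-- `Γ (s + 1)`.
theorem abs_pow_div_Gamma_le (hρ : 0 < ρ) {R z : ℝ} (hz : |z| ≤ R) (k : ℕ) :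
    |z ^ k / Gamma (ρ * k + 1)| ≤ exp ((2 * R) ^ (1 / ρ)) * (1 / 2) ^ k := by
  have hR : 0 ≤ R := (abs_nonneg z).trans hz
  have hΓ : 0 < Gamma (ρ * k + 1) := Gamma_pos_of_pos (by positivity)
  have hlower : (2 * R) ^ k ≤ exp ((2 * R) ^ (1 / ρ)) * Gamma (ρ * k + 1) := by
    have hM := rpow_mul_exp_neg_le_Gamma_add_one (s := ρ * k) (M := (2 * R) ^ (1 / ρ))
      (by positivity) (by positivity)
    rwa [← rpow_mul (by positivity), ← mul_assoc, one_div_mul_cancel hρ.ne', one_mul,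
      rpow_natCast, exp_neg, ← div_eq_mul_inv, div_le_iff₀' (exp_pos _)] at hM
  rw [abs_div, abs_pow, abs_of_pos hΓ, div_le_iff₀ hΓ]
  calc |z| ^ k ≤ R ^ k := pow_le_pow_left₀ (abs_nonneg z) hz k
    _ = (2 * R) ^ k * (1 / 2) ^ k := by rw [← mul_pow]; ring
    _ ≤ exp ((2 * R) ^ (1 / ρ)) * Gamma (ρ * k + 1) * (1 / 2) ^ k := by gcongr
    _ = exp ((2 * R) ^ (1 / ρ)) * (1 / 2) ^ k * Gamma (ρ * k + 1) := by ring

theorem hasSum_mittagLeffler (hρ : 0 < ρ) (z : ℝ) :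
    HasSum (fun k : ℕ ↦ z ^ k / Gamma (ρ * k + 1)) (mittagLeffler ρ z) :=
  (Summable.of_norm_bounded (summable_geometric_two.mul_left _)
    (abs_pow_div_Gamma_le hρ le_rfl)).hasSum

@[simp]
theorem mittagLeffler_zero_right : mittagLeffler ρ 0 = 1 := by
  rw [mittagLeffler, tsum_eq_single 0 fun k hk ↦ by simp [hk]]
  simp

theorem continuous_mittagLeffler (hρ : 0 < ρ) : Continuous (mittagLeffler ρ) := by
  refine continuous_iff_continuousAt.2 fun x ↦ ?_
  have hball : ContinuousOn (mittagLeffler ρ) {z | |z| ≤ |x| + 1} :=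
    continuousOn_tsum (fun k ↦ by fun_prop) (summable_geometric_two.mul_left _)
      fun k z hz ↦ abs_pow_div_Gamma_le hρ hz k
  exact hball.continuousAt ((continuous_abs.tendsto x).eventually_le_const (lt_add_one _))

theorem mul_fracIntegral_mul_rpow_pow_div_Gamma (hρ : 0 < ρ) (c : ℝ) (k : ℕ) {t : ℝ}
    (ht : 0 < t) :
    c * fracIntegral ρ (fun s ↦ (c * s ^ ρ) ^ k / Gamma (ρ * k + 1)) t =
      (c * t ^ ρ) ^ (k + 1) / Gamma (ρ * (k + 1 : ℕ) + 1) := by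
  have hk : 0 ≤ ρ * k := by positivity
  have hΓ : Gamma (ρ * k + 1) ≠ 0 := (Gamma_pos_of_pos (by linarith)).ne'
  have hmonomial : EqOn (fun s ↦ (c * s ^ ρ) ^ k / Gamma (ρ * k + 1))
      (fun s ↦ c ^ k / Gamma (ρ * k + 1) * s ^ (ρ * k)) (Icc 0 t) := fun s hs ↦ by
    simp only [mul_pow, rpow_mul hs.1, rpow_natCast]
    ring
  have hexp : ρ * k + ρ = ρ * (k + 1 : ℕ) := by push_cast; ring
  rw [fracIntegral_congr ht.le hmonomial, fracIntegral_const_mul,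
    fracIntegral_rpow hρ (by linarith) ht, hexp, rpow_mul ht.le, rpow_natCast, mul_pow, pow_succ c]
  field_simp

theorem mittagLeffler_mul_rpow_eq_one_add (hρ : 0 < ρ) (c : ℝ) {t : ℝ} (ht : 0 ≤ t) :
    mittagLeffler ρ (c * t ^ ρ) =
      1 + c * fracIntegral ρ (fun s ↦ mittagLeffler ρ (c * s ^ ρ)) t := by
  rcases ht.eq_or_lt with rfl | ht
  · simp [zero_rpow hρ.ne']
  have hbound : ∀ s ∈ Icc 0 t, |c * s ^ ρ| ≤ |c| * t ^ ρ := fun s hs ↦ by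
    rw [abs_mul, abs_of_nonneg (rpow_nonneg hs.1 ρ)]
    exact mul_le_mul_of_nonneg_left (rpow_le_rpow hs.1 hs.2 hρ.le) (abs_nonneg c)
  have hterms : ∀ k : ℕ, Continuous fun s : ℝ ↦ (c * s ^ ρ) ^ k / Gamma (ρ * k + 1) := fun k ↦
    (((continuous_rpow_const hρ.le).const_mul c).pow k).div_const _
  have htail := (hasSum_fracIntegral hρ ht.le (fun k ↦ (hterms k).continuousOn)
    (summable_geometric_two.mul_left _) (fun k s hs ↦ abs_pow_div_Gamma_le hρ (hbound s hs) k)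
    fun s _ ↦ hasSum_mittagLeffler hρ (c * s ^ ρ)).mul_left c
  simp only [mul_fracIntegral_mul_rpow_pow_div_Gamma hρ c _ ht] at htail
  have hsum := (hasSum_nat_add_iff (f := fun k : ℕ ↦ (c * t ^ ρ) ^ k / Gamma (ρ * k + 1)) 1).1 htail
  simpa [add_comm] using (hasSum_mittagLeffler hρ (c * t ^ ρ)).unique hsum

theorem strictMonoOn_mittagLeffler_Iic (hρ : 0 < ρ) (hρ1 : ρ ≤ 1) :
    StrictMonoOn (mittagLeffler ρ) (Iic 0) := by
  have hcont : ContinuousOn (fun t ↦ mittagLeffler ρ (-1 * t ^ ρ)) (Ici 0) :=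
    ((continuous_mittagLeffler hρ).comp
      ((continuous_rpow_const hρ.le).const_mul (-1))).continuousOn
  have hanti : StrictAntiOn (fun t ↦ mittagLeffler ρ (-1 * t ^ ρ)) (Ici 0) :=
    strictAntiOn_of_eq_sub_fracIntegral hρ hρ1 one_pos one_pos hcont fun t ht ↦ by
      rw [mittagLeffler_mul_rpow_eq_one_add hρ (-1) ht]; ring
  intro x (hx : x ≤ 0) y (hy : y ≤ 0) hxy
  have hroots : (-y) ^ ρ⁻¹ < (-x) ^ ρ⁻¹ :=
    rpow_lt_rpow (neg_nonneg.2 hy) (neg_lt_neg hxy) (inv_pos.2 hρ)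
  have := hanti (rpow_nonneg (neg_nonneg.2 hy) _) (rpow_nonneg (neg_nonneg.2 hx) _) hroots
  simpa [rpow_inv_rpow (neg_nonneg.2 hy) hρ.ne', rpow_inv_rpow (neg_nonneg.2 hx) hρ.ne'] using this

theorem strictMonoOn_mittagLeffler_Ici (hρ : 0 < ρ) : StrictMonoOn (mittagLeffler ρ) (Ici 0) := by
  intro x (hx : 0 ≤ x) y _ hxy
  have hΓ : ∀ k : ℕ, 0 < Gamma (ρ * k + 1) := fun k ↦ Gamma_pos_of_pos (by positivity)
  refine hasSum_lt (i := 1) (fun k ↦ ?_) ?_ (hasSum_mittagLeffler hρ x) (hasSum_mittagLeffler hρ y)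
  · exact div_le_div_of_nonneg_right (pow_le_pow_left₀ hx hxy.le k) (hΓ k).le
  · simpa only [pow_one] using div_lt_div_of_pos_right hxy (hΓ 1)

theorem strictMono_mittagLeffler_s12 (hρ : 0 < ρ) (hρ1 : ρ ≤ 1) : StrictMono (mittagLeffler ρ) :=
  (strictMonoOn_mittagLeffler_Iic hρ hρ1).Iic_union_Ici (strictMonoOn_mittagLeffler_Ici hρ)

end MittagLeffler

theorem stmt12_general {ρ σ₀ t₀ lam₁ : ℝ} (hρ : 0 < ρ) (hρ1 : ρ ≤ 1) (hσ₀ : σ₀ ≤ 1)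
    (ht₀ : 0 < t₀) (hlam₁ : 1 < lam₁) (d₁ : ℝ) :
    (∃! σ : ℝ, σ ∈ Ioo σ₀ 1 ∧ mittagLeffler ρ (-(lam₁ ^ σ * t₀ ^ ρ)) = d₁) ↔
      mittagLeffler ρ (-(lam₁ * t₀ ^ ρ)) < d₁ ∧
        d₁ < mittagLeffler ρ (-(lam₁ ^ σ₀ * t₀ ^ ρ)) := by
  have hanti : StrictAnti fun σ : ℝ ↦ mittagLeffler ρ (-(lam₁ ^ σ * t₀ ^ ρ)) := fun σ τ hστ ↦
    strictMono_mittagLeffler_s12 hρ hρ1 <| neg_lt_neg <|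
      mul_lt_mul_of_pos_right (rpow_lt_rpow_of_exponent_lt hlam₁ hστ) (rpow_pos_of_pos ht₀ ρ)
  have hcont : Continuous fun σ : ℝ ↦ mittagLeffler ρ (-(lam₁ ^ σ * t₀ ^ ρ)) :=
    (continuous_mittagLeffler hρ).comp
      ((continuous_const_rpow (zero_lt_one.trans hlam₁).ne').mul_const _).neg
  simpa only [rpow_one] using existsUnique_mem_Ioo_eq_iff_of_strictAntiOn (d := d₁) hσ₀
    (hanti.strictAntiOn _) hcont.continuousOn

/-- For `ρ ∈ (0,1)`, `σ₀ ∈ (0,1)`, `t₀ > 1` and `λ₁ > 1` with `λ₁^{σ₀} ≥ 5Γ(1−ρ)`, for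
every `d₁ > 0` there is a unique `σ ∈ (σ₀, 1)` with `E_ρ(−λ₁^σ t₀^ρ) = d₁` iff
`E_ρ(−λ₁ t₀^ρ) < d₁ < E_ρ(−λ₁^{σ₀} t₀^ρ)`. -/
theorem stmt12 (ρ σ₀ t₀ lam₁ : ℝ) (hρ : 0 < ρ) (hρ' : ρ < 1) (hσ₀ : 0 < σ₀) (hσ₀' : σ₀ < 1)
    (ht₀ : 1 < t₀) (hlam₁ : 1 < lam₁) (h : 5 * Real.Gamma (1 - ρ) ≤ lam₁ ^ σ₀) :
    ∀ d₁ : ℝ, 0 < d₁ →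
      ((∃! σ : ℝ, σ ∈ Set.Ioo σ₀ 1 ∧ mittagLeffler ρ (-(lam₁ ^ σ * t₀ ^ ρ)) = d₁) ↔
        (mittagLeffler ρ (-(lam₁ * t₀ ^ ρ)) < d₁ ∧
          d₁ < mittagLeffler ρ (-(lam₁ ^ σ₀ * t₀ ^ ρ)))) :=
  fun d₁ _ ↦ stmt12_general hρ hρ'.le hσ₀'.le (zero_lt_one.trans ht₀) hlam₁ d₁
end
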